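/- arXiv:1705.04960 — 3 statements merged into one kernel-verified Lean document; each statement's English description precedes it below -/
import Mathlib

section
/- Let A be an abelian category and E a class of objects of A. Then the full subcategory B = E^{⊥_{0,1}} of objects C with Hom_A(E,C) = 0 = Ext¹_A(E,C) for all E ∈ E is closed under infinite products, kernels of arbitrary morphisms between its objects, and extensions in A. -/
open CategoryTheory CategoryTheory.Limits CategoryTheory.Abelian

universe w w' v u

/-!
For `Z` in `E`, left exactness of `Hom(Z, -)` and the long exact `Ext` sequence settle extensions
and kernels; for the kernel of `g : M ⟶ N`, apply the sequence to `0 ⟶ ker g ⟶ M ⟶ im g ⟶ 0`,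
where `Hom(Z, im g) ⊆ Hom(Z, N) = 0`.

Products are the delicate case, since products need not be exact. A class `x ∈ Ext¹(Z, ∏ Yᵢ)` is
killed by an epimorphism `p : W ⟶ Z`, so it is the pushout of `0 ⟶ ker p ⟶ W ⟶ Z ⟶ 0` along some
`k : ker p ⟶ ∏ Yᵢ`. If every component of `x` vanishes, every component of `k` extends to `W`;
these extensions assemble to an extension of `k`, so `x = 0`.
-/

section Effaceability

lemma epi_f_of_epi_homologyMap {V ι : Type*} [Category* V] [Abelian V] {c : ComplexShape ι}
    {K L : HomologicalComplex V c} (φ : K ⟶ L) (j : ι) [Epi (HomologicalComplex.homologyMap φ j)]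
    (d_to : L.d (c.prev j) j = 0) (d_from : L.d j (c.next j) = 0) : Epi (φ.f j) := by
  have := L.isIso_homologyπ (c.prev j) j rfl d_to
  have := L.isIso_iCycles j (c.next j) rfl d_from
  have : Epi (HomologicalComplex.cyclesMap φ j ≫ L.homologyπ j) := by
    rw [← HomologicalComplex.homologyπ_naturality]
    infer_instance
  have : Epi (HomologicalComplex.cyclesMap φ j) := (epi_comp_iff_of_isIso _ (L.homologyπ j)).1 this
  have : Epi (K.iCycles j ≫ φ.f j) := by
    rw [← HomologicalComplex.cyclesMap_i]
    infer_instance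
  exact epi_of_epi (K.iCycles j) (φ.f j)

lemma exists_single_map_f_eq_comp {V ι : Type*} [Category* V] [HasZeroMorphisms V] [HasZeroObject V]
    [DecidableEq ι] {c : ComplexShape ι} {K : HomologicalComplex V c} {j : ι} {X : V}
    (φ : K ⟶ (HomologicalComplex.single V c j).obj X) (d_from : ∀ k, c.Rel j k → K.d j k = 0) :
    ∃ t : (HomologicalComplex.single V c j).obj (K.X j) ⟶ K,
      (HomologicalComplex.single V c j).map
        (φ.f j ≫ (HomologicalComplex.singleObjXSelf c j X).hom) = t ≫ φ := by
  refine ⟨HomologicalComplex.mkHomFromSingle (𝟙 (K.X j)) fun k hk ↦ ?_,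
    HomologicalComplex.from_single_hom_ext ?_⟩
  · rw [d_from k hk, comp_zero]
  · simp [HomologicalComplex.single_map_f_self]

variable {A : Type u} [Category.{v} A] [Abelian A]

/-
Represent `f` by a roof `X ⟵ K ⟶ L` with `K` concentrated in degrees at most `i`: then `K.X i` maps
onto `X`, and this map lifts to `K`, whose component in degree `i` is annihilated by `K ⟶ L`.
-/
lemma exists_epi_Q_map_single_map_comp_eq_zero [HasDerivedCategory.{w'} A] {i : ℤ} {X : A}
    {L : CochainComplex A ℤ} (hL : IsZero (L.X i))
    (f : DerivedCategory.Q.obj ((HomologicalComplex.single A (.up ℤ) i).obj X) ⟶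
      DerivedCategory.Q.obj L) :
    ∃ (W : A) (p : W ⟶ X), Epi p ∧
      DerivedCategory.Q.map ((HomologicalComplex.single A (.up ℤ) i).map p) ≫ f = 0 := by
  have : CochainComplex.IsStrictlyLE ((HomologicalComplex.single A (.up ℤ) i).obj X) i :=
    inferInstanceAs (((CochainComplex.singleFunctor A i).obj X).IsStrictlyLE i)
  obtain ⟨K, _, s, hs, g, rfl⟩ := DerivedCategory.right_fac_of_isStrictlyLE f i
  rw [DerivedCategory.isIso_Q_map_iff_quasiIso] at hs
  have := epi_f_of_epi_homologyMap s i rfl rfl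
  obtain ⟨t, ht⟩ := exists_single_map_f_eq_comp s fun k hk ↦
    (K.isZero_of_isStrictlyLE i k (by simp only [ComplexShape.up_Rel] at hk; lia)).eq_of_tgt _ _
  have htg : t ≫ g = 0 := HomologicalComplex.from_single_hom_ext (hL.eq_of_tgt _ _)
  refine ⟨K.X i, _, epi_comp (s.f i) (HomologicalComplex.singleObjXSelf (.up ℤ) i X).hom, ?_⟩
  rw [ht, Functor.map_comp, Category.assoc, IsIso.hom_inv_id_assoc, ← Functor.map_comp, htg,
    Functor.map_zero]

variable [HasExt.{w} A]

lemma exists_epi_mk₀_comp_eq_zero {X Y : A} {n : ℕ} (x : Ext X Y (n + 1)) :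
    ∃ (W : A) (p : W ⟶ X), Epi p ∧ (Ext.mk₀ p).comp x (zero_add _) = 0 := by
  let := HasDerivedCategory.standard A
  let e := ((DerivedCategory.singleFunctors A).shiftIso (n + 1) (-(n + 1)) 0 (by lia)).app Y
  obtain ⟨W, p, hp, h⟩ := exists_epi_Q_map_single_map_comp_eq_zero
    (L := (CochainComplex.singleFunctor A (-(n + 1))).obj Y)
    (HomologicalComplex.isZero_single_obj_X _ _ _ _ (by lia)) (x.hom ≫ e.hom)
  refine ⟨W, p, hp, ?_⟩
  ext
  rw [Ext.comp_hom, Ext.mk₀_hom, ShiftedHom.mk₀_comp, Ext.zero_hom, ← cancel_mono e.hom,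
    Limits.zero_comp, Category.assoc]
  exact h

lemma exists_shortExact_extClass_comp_eq {X Y : A} {n : ℕ} (x : Ext X Y (n + 1)) :
    ∃ (K W : A) (i : K ⟶ W) (p : W ⟶ X) (w : i ≫ p = 0)
      (hS : (ShortComplex.mk i p w).ShortExact) (k : Ext K Y n),
      hS.extClass.comp k (add_comm 1 n) = x := by
  obtain ⟨W, p, _, hpx⟩ := exists_epi_mk₀_comp_eq_zero x
  have hS : (ShortComplex.mk (kernel.ι p) p (kernel.condition p)).ShortExact :=
    { exact := ShortComplex.exact_kernel p }
  exact ⟨_, _, _, _, _, hS, Ext.contravariant_sequence_exact₃ hS Y x hpx (add_comm 1 n)⟩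

end Effaceability

section ExtExactness

variable {A : Type u} [Category.{v} A] [Abelian A] [HasExt.{w} A]

lemma extClass_comp_mk₀_eq_zero_iff {S : ShortComplex A} (hS : S.ShortExact) {Y : A}
    (k : S.X₁ ⟶ Y) :
    hS.extClass.comp (Ext.mk₀ k) (add_zero 1) = 0 ↔ ∃ l : S.X₂ ⟶ Y, S.f ≫ l = k := by
  constructor
  · intro h
    obtain ⟨l, hl⟩ := Ext.contravariant_sequence_exact₁ hS Y _ (add_zero 1) h
    obtain ⟨l, rfl⟩ := (Ext.mk₀_bijective _ _).surjective l
    exact ⟨l, (Ext.mk₀_bijective _ _).injective (by rw [← hl, Ext.mk₀_comp_mk₀])⟩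
  · rintro ⟨l, rfl⟩
    rw [← Ext.mk₀_comp_mk₀, hS.extClass_comp_assoc]

lemma ext_one_eq_zero_of_comp_mk₀_proj_eq_zero {ι : Type*} {Y : ι → A} {c : Fan Y}
    (hc : IsLimit c) {X : A} (x : Ext X c.pt 1)
    (hx : ∀ i, x.comp (Ext.mk₀ (c.proj i)) (add_zero 1) = 0) : x = 0 := by
  obtain ⟨K, W, i, p, w, hS, k, rfl⟩ := exists_shortExact_extClass_comp_eq x
  obtain ⟨k, rfl⟩ := (Ext.mk₀_bijective _ _).surjective k
  have component_extends (b : ι) : ∃ l : W ⟶ Y b, i ≫ l = k ≫ c.proj b := by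
    rw [← extClass_comp_mk₀_eq_zero_iff hS, ← Ext.mk₀_comp_mk₀,
      ← Ext.comp_assoc_of_third_deg_zero]
    exact hx b
  choose l hl using component_extends
  refine (extClass_comp_mk₀_eq_zero_iff hS k).2 ⟨Fan.IsLimit.lift hc l, ?_⟩
  exact Fan.IsLimit.hom_ext hc _ _ fun b ↦ by simp [hl]

lemma subsingleton_ext_X₂_of_shortExact {S : ShortComplex A} (hS : S.ShortExact) (X : A) (n : ℕ)
    [Subsingleton (Ext X S.X₁ n)] [Subsingleton (Ext X S.X₃ n)] :
    Subsingleton (Ext X S.X₂ n) := by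
  refine subsingleton_of_forall_eq 0 fun x ↦ ?_
  obtain ⟨y, rfl⟩ := Ext.covariant_sequence_exact₂ X hS x (Subsingleton.elim _ _)
  rw [Subsingleton.elim y 0, Ext.zero_comp]

lemma subsingleton_ext_one_X₁_of_exact {S : ShortComplex A} (hS : S.Exact) [Mono S.f] {X : A}
    (hX : ∀ f : X ⟶ S.X₃, f = 0) [Subsingleton (Ext X S.X₂ 1)] :
    Subsingleton (Ext X S.X₁ 1) := by
  have hT : (ShortComplex.mk S.f (cokernel.π S.f) (cokernel.condition S.f)).ShortExact :=
    { exact := ShortComplex.exact_cokernel S.f }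
  have := hS.mono_cokernelDesc
  have hom_eq_zero (f : X ⟶ cokernel S.f) : f = 0 := by
    rw [← cancel_mono (cokernel.desc S.f S.g S.zero), zero_comp]
    exact hX _
  refine subsingleton_of_forall_eq 0 fun x ↦ ?_
  obtain ⟨y, rfl⟩ := Ext.covariant_sequence_exact₁ X hT x
    (Subsingleton.elim (α := Ext X S.X₂ 1) _ _) (zero_add 1)
  obtain ⟨y, rfl⟩ := (Ext.mk₀_bijective _ _).surjective y
  rw [hom_eq_zero y, Ext.mk₀_zero, Ext.zero_comp]

end ExtExactness

section RightOrthogonal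

variable {C : Type*} [Category* C]

instance rightOrthogonal_isClosedUnderSubobjects [HasZeroMorphisms C] (P : ObjectProperty C) :
    P.rightOrthogonal.IsClosedUnderSubobjects where
  prop_of_mono i _ hY _ f hX := by rw [← cancel_mono i, hY (f ≫ i) hX, zero_comp]

instance rightOrthogonal_isClosedUnderLimitsOfShape [HasZeroMorphisms C] (P : ObjectProperty C)
    (J : Type*) [Category* J] : P.rightOrthogonal.IsClosedUnderLimitsOfShape J where
  limitsOfShape_le := by
    rintro _ ⟨h⟩ _ f hX
    exact h.isLimit.hom_ext fun j ↦ by rw [h.prop_diag_obj j (f ≫ h.π.app j) hX, zero_comp]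

instance rightOrthogonal_isClosedUnderExtensions [Preadditive C] [Balanced C]
    (P : ObjectProperty C) : P.rightOrthogonal.IsClosedUnderExtensions where
  prop_X₂_of_shortExact {S} hS h₁ h₃ _ f hX := by
    have := hS.mono_f
    have hfg : f ≫ S.g = 0 := h₃ (f ≫ S.g) hX
    have hlift : hS.exact.lift f hfg = 0 := h₁ (hS.exact.lift f hfg) hX
    rw [← hS.exact.lift_f f hfg, hlift, zero_comp]

end RightOrthogonal

section RightPerpendicular

variable {A : Type u} [Category.{v} A] [Abelian A] [HasExt.{w} A] (P : ObjectProperty A)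

/-- The objects `Y` such that `Extⁿ(X, Y) = 0` for all `X` satisfying `P`; together with
`ObjectProperty.rightOrthogonal` it makes up the right perpendicular subcategory. -/
def rightExtOrthogonal (n : ℕ) : ObjectProperty A :=
  fun Y ↦ ∀ ⦃X : A⦄, P X → Subsingleton (Ext X Y n)

/-- The right perpendicular subcategory `P^{⊥_{0,1}}` of Geigle and Lenzing: the objects receiving
no nonzero morphism and no nonzero extension class from the objects satisfying `P`. -/
def rightPerpendicular : ObjectProperty A :=
  P.rightOrthogonal ⊓ rightExtOrthogonal P 1

variable {P}

instance rightExtOrthogonal_isClosedUnderExtensions (n : ℕ) :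
    (rightExtOrthogonal P n).IsClosedUnderExtensions where
  prop_X₂_of_shortExact hS h₁ h₃ X hX := by
    have := h₁ hX
    have := h₃ hX
    exact subsingleton_ext_X₂_of_shortExact hS X n

lemma rightExtOrthogonal_one_of_isLimit_fan {ι : Type*} {Y : ι → A} {c : Fan Y} (hc : IsLimit c)
    (hY : ∀ i, rightExtOrthogonal P 1 (Y i)) : rightExtOrthogonal P 1 c.pt :=
  fun _ hX ↦ subsingleton_of_forall_eq 0 fun x ↦
    ext_one_eq_zero_of_comp_mk₀_proj_eq_zero hc x fun i ↦ (hY i hX).elim _ _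

lemma rightExtOrthogonal_one_kernel {M N : A} (g : M ⟶ N) (hM : rightExtOrthogonal P 1 M)
    (hN : P.rightOrthogonal N) : rightExtOrthogonal P 1 (kernel g) := by
  intro X hX
  have := hM hX
  exact subsingleton_ext_one_X₁_of_exact (ShortComplex.exact_kernel g) fun f ↦ hN f hX

lemma rightPerpendicular_iff {C : A} :
    rightPerpendicular P C ↔ ∀ X, P X → (∀ f : X ⟶ C, f = 0) ∧ Subsingleton (Ext X C 1) :=
  ⟨fun h _ hX ↦ ⟨fun f ↦ h.1 f hX, h.2 hX⟩,
    fun h ↦ ⟨fun X f hX ↦ (h X hX).1 f, fun X hX ↦ (h X hX).2⟩⟩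

lemma rightPerpendicular_of_isLimit_fan {ι : Type*} {Y : ι → A} {c : Fan Y} (hc : IsLimit c)
    (hY : ∀ i, rightPerpendicular P (Y i)) : rightPerpendicular P c.pt :=
  ⟨P.rightOrthogonal.prop_of_isLimit hc fun i ↦ (hY i.as).1,
    rightExtOrthogonal_one_of_isLimit_fan hc fun i ↦ (hY i).2⟩

lemma rightPerpendicular_kernel {M N : A} (g : M ⟶ N) (hM : rightPerpendicular P M)
    (hN : P.rightOrthogonal N) : rightPerpendicular P (kernel g) :=
  ⟨P.rightOrthogonal.prop_of_mono (kernel.ι g) hM.1, rightExtOrthogonal_one_kernel g hM.2 hN⟩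

instance rightPerpendicular_isClosedUnderExtensions :
    (rightPerpendicular P).IsClosedUnderExtensions where
  prop_X₂_of_shortExact hS h₁ h₃ :=
    ⟨P.rightOrthogonal.prop_X₂_of_shortExact hS h₁.1 h₃.1,
      (rightExtOrthogonal P 1).prop_X₂_of_shortExact hS h₁.2 h₃.2⟩

end RightPerpendicular

theorem right_one_perpendicular_closure_general
    {A : Type u} [Category.{v} A] [Abelian A] [HasExt.{w} A] (P : ObjectProperty A) :
    (∀ (ι : Type w') (f : ι → A), (∀ i, rightPerpendicular P (f i)) →
      ∀ (c : Fan f), IsLimit c → rightPerpendicular P c.pt) ∧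
    (∀ (X Y : A), rightPerpendicular P X → P.rightOrthogonal Y →
      ∀ g : X ⟶ Y, rightPerpendicular P (kernel g)) ∧
    (∀ S : ShortComplex A, S.ShortExact →
      rightPerpendicular P S.X₁ → rightPerpendicular P S.X₃ → rightPerpendicular P S.X₂) :=
  ⟨fun _ _ hf _ hc ↦ rightPerpendicular_of_isLimit_fan hc hf,
    fun _ _ hX hY g ↦ rightPerpendicular_kernel g hX hY,
    fun _ hS ↦ (rightPerpendicular P).prop_X₂_of_shortExact hS⟩

/-- Geigle–Lenzing: for an abelian category `A` and a class of objects `E`, the full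
subcategory `B = E^{⊥_{0,1}}` of objects `C` with `Hom(X,C) = 0 = Ext¹(X,C)` for all
`X ∈ E` is closed under infinite products (whenever they exist in `A`), kernels of
arbitrary morphisms between its objects, and extensions. -/
theorem right_one_perpendicular_closure
    {A : Type u} [Category.{v} A] [Abelian A] [HasExt.{w} A]
    (E : Set A) (B : Set A)
    (hB : ∀ C : A, C ∈ B ↔ ∀ X ∈ E, (∀ f : X ⟶ C, f = 0) ∧ Subsingleton (Ext X C 1)) :
    -- closed under infinite products
    (∀ (ι : Type w') (f : ι → A), (∀ i, f i ∈ B) →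
      ∀ (c : Fan f), IsLimit c → c.pt ∈ B) ∧
    -- closed under kernels of arbitrary morphisms between objects of `B`
    (∀ (X Y : A), X ∈ B → Y ∈ B → ∀ g : X ⟶ Y, kernel g ∈ B) ∧
    -- closed under extensions
    (∀ S : ShortComplex A, S.ShortExact → S.X₁ ∈ B → S.X₃ ∈ B → S.X₂ ∈ B) := by
  obtain rfl : B = {C | rightPerpendicular (· ∈ E) C} :=
    Set.ext fun C ↦ (hB C).trans rightPerpendicular_iff.symm
  obtain ⟨products, kernels, extensions⟩ := right_one_perpendicular_closure_general (· ∈ E)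
  exact ⟨products, fun X Y hX hY ↦ kernels X Y hX hY.1, extensions⟩
end

section
/- The surjective homomorphism B → C of abelian groups, where A = ℤ_p^{(ω)} is a countable direct sum of copies of the p-adic integers, B = ℚ ⊗_ℤ A, and C = (ℚ/ℤ) ⊗_ℤ A, has no kernel in the full subcategory of contraadjusted abelian groups; that is, there is no contraadjusted abelian group K with a morphism K → B that is a kernel of B → C in that full subcategory. -/
open CategoryTheory TensorProduct

/-- An abelian group `D` is contraadjusted if `Ext¹_ℤ(ℤ[s⁻¹], D) = 0` for every
integer `s`. -/
def Contraadjusted (D : Type) [AddCommGroup D] : Prop :=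
  ∀ s : ℤ, Subsingleton
    (((Ext ℤ (ModuleCat.{0} ℤ) 1).obj
        (Opposite.op (ModuleCat.of ℤ (Localization.Away s)))).obj (ModuleCat.of ℤ D))

/-- `A = ℤ_p^{(ω)}`, a countable direct sum of copies of the `p`-adic integers. -/
abbrev PadicDirectSum (p : ℕ) [Fact p.Prime] : Type := ℕ →₀ ℤ_[p]

/-- `B = ℚ ⊗_ℤ A`. -/
abbrev QTensorA (p : ℕ) [Fact p.Prime] : Type := ℚ ⊗[ℤ] (PadicDirectSum p)

/-- The canonical map `A → B = ℚ ⊗_ℤ A`, `a ↦ 1 ⊗ a`. -/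
noncomputable def iotaAB (p : ℕ) [Fact p.Prime] :
    PadicDirectSum p →ₗ[ℤ] QTensorA p :=
  TensorProduct.mk ℤ ℚ (PadicDirectSum p) 1

/-- `C = (ℚ/ℤ) ⊗_ℤ A`, realized as the cokernel of `A → B`. -/
abbrev QmodZTensorA (p : ℕ) [Fact p.Prime] : Type :=
  QTensorA p ⧸ LinearMap.range (iotaAB p)

/-- The surjection `B → C`. -/
noncomputable def piBC (p : ℕ) [Fact p.Prime] : QTensorA p →ₗ[ℤ] QmodZTensorA p :=
  (LinearMap.range (iotaAB p)).mkQ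

/-!
Over any commutative ring, `0 → R[X] → R[X] → R[s⁻¹] → 0` with first map `1 - s X` is a free
resolution, and `Hom(R[X], M)` is the module of sequences in `M`. Hence `Ext¹(R[s⁻¹], M) = 0` means
that every system `xₙ - s xₙ₊₁ = dₙ` is solvable in `M`. Solvability passes to quotients and holds
in `ℤ_p` by completeness, but fails in an infinite direct sum of copies of `ℤ_p` for `s = p`: if
`dₙ` is `1` in the `n`-th summand, then the `n`-th component of `x₀` is `pⁿ` modulo `pⁿ⁺¹`, hence
nonzero for all `n`.

Suppose that `B → C` has kernel `A = ⨁ ℤ_p` and that `K → B` is its kernel among contraadjusted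
groups. Each summand `ℤ_p → A → B` lifts to `K`, so the image of `K` in `B` is all of `A`. Thus `A`
is a quotient of a contraadjusted group, hence contraadjusted: a contradiction.
-/

section Ext

variable {R : Type*} [Ring R] {𝒜 : Type*} [Category* 𝒜] [Abelian 𝒜]

lemma subsingleton_ext_succ_iff_of_projectiveResolution [Linear R 𝒜] [EnoughProjectives 𝒜]
    {X : 𝒜} (P : ProjectiveResolution X) (Y : 𝒜) (n : ℕ) :
    Subsingleton (((Ext R 𝒜 (n + 1)).obj (Opposite.op X)).obj Y) ↔
      ∀ f : P.complex.X (n + 1) ⟶ Y, P.complex.d (n + 2) (n + 1) ≫ f = 0 →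
        ∃ g : P.complex.X n ⟶ Y, P.complex.d (n + 1) n ≫ g = f := by
  rw [← ModuleCat.isZero_iff_subsingleton, (P.isoExt (R := R) (n + 1) Y).isZero_iff,
    ← HomologicalComplex.exactAt_iff_isZero_homology,
    HomologicalComplex.exactAt_iff' _ n (n + 1) (n + 2) (by simp) (by simp),
    ShortComplex.moduleCat_exact_iff]
  rfl

lemma subsingleton_ext_succ_iff_abelianExt [Linear R 𝒜] [EnoughProjectives 𝒜] [HasExt 𝒜]
    (X Y : 𝒜) (n : ℕ) :
    Subsingleton (((Ext R 𝒜 (n + 1)).obj (Opposite.op X)).obj Y) ↔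
      Subsingleton (Abelian.Ext X Y (n + 1)) := by
  let P := ProjectiveResolution.of X
  rw [subsingleton_ext_succ_iff_of_projectiveResolution P]
  constructor
  · refine fun h => subsingleton_of_forall_eq 0 fun e => ?_
    obtain ⟨f, hf, rfl⟩ := P.extMk_surjective e (n + 2) rfl
    exact (P.extMk_eq_zero_iff f (n + 2) rfl hf n rfl).2 (h f hf)
  · exact fun _ f hf =>
      (P.extMk_eq_zero_iff f (n + 2) rfl hf n rfl).1 (Subsingleton.elim _ _)

lemma subsingleton_abelianExt_one_iff_of_shortExact [HasExt 𝒜] {S : ShortComplex 𝒜}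
    (hS : S.ShortExact) [Projective S.X₂] (Y : 𝒜) :
    Subsingleton (Abelian.Ext S.X₃ Y 1) ↔
      ∀ f : S.X₁ ⟶ Y, ∃ g : S.X₂ ⟶ Y, S.f ≫ g = f := by
  constructor
  · intro _ f
    obtain ⟨x, hx⟩ := Abelian.Ext.contravariant_sequence_exact₁ hS _ (Abelian.Ext.mk₀ f)
      (add_zero 1) (Subsingleton.elim _ _)
    refine ⟨Abelian.Ext.homEquiv₀ x, Abelian.Ext.homEquiv₀.symm.injective ?_⟩
    rw [← Abelian.Ext.mk₀_homEquiv₀_apply x, Abelian.Ext.mk₀_comp_mk₀] at hx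
    exact hx
  · refine fun h => subsingleton_of_forall_eq 0 fun e => ?_
    obtain ⟨x, rfl⟩ := Abelian.Ext.contravariant_sequence_exact₃ hS _ e
      (Abelian.Ext.eq_zero_of_projective _) (add_zero 1)
    obtain ⟨g, hg⟩ := h (Abelian.Ext.homEquiv₀ x)
    rw [← Abelian.Ext.mk₀_homEquiv₀_apply x, ← hg, ← Abelian.Ext.mk₀_comp_mk₀]
    exact hS.extClass_comp_assoc _

end Ext

section Telescope

variable {R : Type*} [CommRing R] (s : R) (M : Type*) [AddCommGroup M] [Module R M]

/-- The telescope map `(xₙ) ↦ (xₙ - s xₙ₊₁)` on sequences in `M`, whose cokernel is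
`lim¹ (⋯ → M → M → M)`, all transition maps being multiplication by `s`. -/
def telescope : (ℕ → M) →ₗ[R] ℕ → M :=
  LinearMap.id - s • LinearMap.funLeft R M Nat.succ

variable {M}

@[simp]
lemma telescope_apply (x : ℕ → M) (n : ℕ) : telescope s M x n = x n - s • x (n + 1) := rfl

lemma coe_telescope_algebraMap {S : Type*} [CommRing S] [Algebra S R] [Module S M]
    [IsScalarTower S R M] (t : S) :
    ⇑(telescope (algebraMap S R t) M) = telescope t M := by
  ext x n
  simp only [telescope_apply, algebraMap_smul]

lemma eq_sum_telescope_add (x : ℕ → M) (n : ℕ) :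
    x 0 = ∑ k ∈ Finset.range n, s ^ k • telescope s M x k + s ^ n • x n := by
  induction n with
  | zero => simp
  | succ n ih =>
    rw [Finset.sum_range_succ, telescope_apply, smul_sub, smul_smul, ← pow_succ, add_assoc,
      sub_add_cancel]
    exact ih

variable {s}

lemma telescope_surjective_of_surjective {N : Type*} [AddCommGroup N] [Module R N]
    {f : M →ₗ[R] N} (hf : Function.Surjective f) (h : Function.Surjective (telescope s M)) :
    Function.Surjective (telescope s N) := by
  intro d
  obtain ⟨d', rfl⟩ := hf.comp_left d
  obtain ⟨x, rfl⟩ := h d'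
  exact ⟨f ∘ x, by ext n; simp⟩

lemma telescope_surjective_of_smul_surjective (h : Function.Surjective fun m : M => s • m) :
    Function.Surjective (telescope s M) := by
  intro d
  choose divide hdivide using h
  refine ⟨fun n => n.rec 0 fun k y => divide (y - d k), funext fun n => ?_⟩
  exact (congrArg _ (hdivide _)).trans (sub_sub_cancel _ _)

lemma telescope_surjective_of_mem {I : Ideal R} [IsAdicComplete I M] (hs : s ∈ I) :
    Function.Surjective (telescope s M) := by
  intro d
  let S (n m : ℕ) : M := ∑ k ∈ Finset.range m, s ^ k • d (n + k)
  have hS_succ (n m : ℕ) : S n (m + 1) = d n + s • S (n + 1) m := by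
    simp only [S, Finset.sum_range_succ', Finset.smul_sum, smul_smul, ← pow_succ', pow_zero,
      one_smul, add_zero, add_comm (d n), add_right_comm n 1, add_assoc]
  have hpow (m : ℕ) (y : M) : s ^ m • y ∈ (I ^ m • ⊤ : Submodule R M) :=
    Submodule.smul_mem_smul (Ideal.pow_mem_pow hs m) trivial
  have hcauchy (n : ℕ) {m m' : ℕ} (hm : m ≤ m') :
      S n m ≡ S n m' [SMOD (I ^ m • ⊤ : Submodule R M)] := by
    obtain ⟨j, rfl⟩ := Nat.exists_eq_add_of_le hm
    rw [SModEq.comm, SModEq.sub_mem]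
    simp only [S, Finset.sum_range_add, add_sub_cancel_left]
    refine Submodule.sum_mem _ fun k _ => ?_
    rw [pow_add, mul_smul]
    exact hpow m _
  choose x hx using fun n => IsPrecomplete.prec inferInstance (hcauchy n)
  refine ⟨x, funext fun n => (IsHausdorff.eq_iff_smodEq (I := I)).2 fun m => ?_⟩
  have hd : d n = S n (m + 1) - s • S (n + 1) m := by rw [hS_succ, add_sub_cancel_right]
  rw [telescope_apply, hd]
  exact (((hcauchy n m.le_succ).symm.trans (hx n m)).sub ((hx (n + 1) m).smul s)).symm

lemma telescope_surjective_of_isAdicComplete_maximalIdeal [IsLocalRing R]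
    [IsAdicComplete (IsLocalRing.maximalIdeal R) M] (s : R) :
    Function.Surjective (telescope s M) := by
  by_cases hs : IsUnit s
  · exact telescope_surjective_of_smul_surjective fun m => ⟨hs.unit⁻¹ • m, smul_inv_smul hs.unit m⟩
  · exact telescope_surjective_of_mem ((IsLocalRing.mem_maximalIdeal s).2 hs)

lemma not_surjective_telescope_finsupp {ι : Type*} [Infinite ι]
    (h : ∀ n : ℕ, ∃ m : M, ∀ y : M, s ^ (n + 1) • y ≠ s ^ n • m) :
    ¬ Function.Surjective (telescope s (ι →₀ M)) := by
  classical
  intro hsurj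
  choose m hm using h
  let e : ℕ ↪ ι := Infinite.natEmbedding ι
  obtain ⟨x, hx⟩ := hsurj fun n => Finsupp.single (e n) (m n)
  obtain ⟨n, hn⟩ := Infinite.exists_notMem_finset ((x 0).support.preimage e e.injective.injOn)
  have hx₀ : x 0 (e n) = 0 := by simpa using hn
  have hsum : 0 = s ^ n • m n + s ^ (n + 1) • x (n + 1) (e n) := by
    have hx₀_sum := DFunLike.congr_fun (eq_sum_telescope_add s x (n + 1)) (e n)
    rw [hx] at hx₀_sum
    simpa [hx₀, Finsupp.finsetSum_apply, Finsupp.single_apply, Finset.sum_range_succ]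
      using hx₀_sum
  refine hm n (-x (n + 1) (e n)) ?_
  rw [smul_neg, neg_eq_iff_add_eq_zero, add_comm, ← hsum]

end Telescope

section Away

open Polynomial

universe u

variable {R : Type u} [CommRing R] (s : R)

lemma mulLeft_one_sub_C_mul_X_injective :
    Function.Injective (LinearMap.mulLeft R (1 - C s * X : R[X])) := by
  refine (injective_iff_map_eq_zero _).2 fun a ha => ?_
  exact (mem_nonzeroDivisors_of_coeff_mem 0 (by simp)).1 a ha

/-- The surjection `R[X] → R[s⁻¹]` sending `X` to `s⁻¹`. -/
noncomputable def polynomialToAway : R[X] →ₐ[R] Localization.Away s :=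
  (Localization.awayEquivAdjoin s).symm.toAlgHom.comp (AdjoinRoot.mkₐ (C s * X - 1))

lemma polynomialToAway_surjective : Function.Surjective (polynomialToAway s) :=
  (Localization.awayEquivAdjoin s).symm.surjective.comp AdjoinRoot.mk_surjective

lemma exact_mulLeft_polynomialToAway :
    Function.Exact (LinearMap.mulLeft R (1 - C s * X : R[X])) (polynomialToAway s) := by
  intro a
  calc polynomialToAway s a = 0
    _ ↔ AdjoinRoot.mk (C s * X - 1) a = 0 :=
      EmbeddingLike.map_eq_zero_iff (f := (Localization.awayEquivAdjoin s).symm)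
    _ ↔ 1 - C s * X ∣ a := by rw [AdjoinRoot.mk_eq_zero, ← neg_dvd, neg_sub]
    _ ↔ a ∈ Set.range (LinearMap.mulLeft R (1 - C s * X : R[X])) := by
      simp only [dvd_def, eq_comm, Set.mem_range, LinearMap.mulLeft_apply]

lemma telescope_comp_monomial {M : Type*} [AddCommGroup M] [Module R M] (f : R[X] →ₗ[R] M) :
    telescope s M (fun n => f (monomial n 1)) =
      fun n => (f ∘ₗ LinearMap.mulLeft R (1 - C s * X)) (monomial n 1) := by
  ext n
  rw [telescope_apply, LinearMap.comp_apply, LinearMap.mulLeft_apply, sub_mul, one_mul, mul_assoc,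
    X_mul_monomial, C_mul', map_sub, map_smul]

lemma surjective_comp_mulLeft_iff_telescope (M : Type*) [AddCommGroup M] [Module R M] :
    (∀ f : R[X] →ₗ[R] M, ∃ g : R[X] →ₗ[R] M, g ∘ₗ LinearMap.mulLeft R (1 - C s * X) = f) ↔
      Function.Surjective (telescope s M) := by
  let toSeq : (R[X] →ₗ[R] M) ≃ (ℕ → M) := ((basisMonomials R).constr R).symm.toEquiv
  have toSeq_apply (f : R[X] →ₗ[R] M) : toSeq f = fun n => f (monomial n 1) := rfl
  have hcomm (g : R[X] →ₗ[R] M) :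
      toSeq (g ∘ₗ LinearMap.mulLeft R (1 - C s * X)) = telescope s M (toSeq g) := by
    rw [toSeq_apply, toSeq_apply, telescope_comp_monomial]
  simp only [Function.Surjective, ← toSeq.forall_congr_right, ← toSeq.exists_congr_right, ← hcomm,
    toSeq.apply_eq_iff_eq]

-- The ring `S` is kept separate from `R` because `Contraadjusted` uses the `ℤ`-linear structure
-- that `ModuleCat ℤ` has as a preadditive category, not the one it has as a category of modules.
theorem subsingleton_ext_away_iff {S : Type*} [Ring S] [Linear S (ModuleCat.{u} R)]
    (M : Type u) [AddCommGroup M] [Module R M] :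
    Subsingleton (((Ext S (ModuleCat.{u} R) 1).obj
        (Opposite.op (ModuleCat.of R (Localization.Away s)))).obj (ModuleCat.of R M)) ↔
      Function.Surjective (telescope s M) := by
  let T : ShortComplex (ModuleCat.{u} R) := ModuleCat.shortComplexOfCompEqZero
    (LinearMap.mulLeft R (1 - C s * X)) (polynomialToAway s).toLinearMap
    (exact_mulLeft_polynomialToAway s).linearMap_comp_eq_zero
  have hT : T.ShortExact := ModuleCat.shortComplex_shortExact T
    (exact_mulLeft_polynomialToAway s) (mulLeft_one_sub_C_mul_X_injective s)
    (polynomialToAway_surjective s)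
  have : Projective T.X₂ := (IsProjective.iff_projective (R := R) (P := R[X])).1 inferInstance
  rw [subsingleton_ext_succ_iff_abelianExt,
    subsingleton_abelianExt_one_iff_of_shortExact hT, ← surjective_comp_mulLeft_iff_telescope]
  constructor
  · intro h f
    obtain ⟨g, hg⟩ := h (ModuleCat.ofHom f)
    exact ⟨g.hom, congrArg ModuleCat.Hom.hom hg⟩
  · intro h f
    obtain ⟨g, hg⟩ := h f.hom
    exact ⟨ModuleCat.ofHom g, ModuleCat.hom_ext hg⟩

end Away

section Contraadjusted

lemma contraadjusted_iff_telescope {D : Type} [AddCommGroup D] :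
    Contraadjusted D ↔ ∀ s : ℤ, Function.Surjective (telescope s D) :=
  forall_congr' fun s => by
    -- `Contraadjusted` uses the canonical `ℤ`-module structure of the additive group `ℤ[s⁻¹]`,
    -- which is equal but not syntactically equal to the one coming from the localization.
    convert subsingleton_ext_away_iff s D
    exacts [rfl, Subsingleton.elim _ _]

lemma Contraadjusted.of_surjective {D E : Type} [AddCommGroup D] [AddCommGroup E]
    (hD : Contraadjusted D) {f : D →ₗ[ℤ] E} (hf : Function.Surjective f) : Contraadjusted E :=
  contraadjusted_iff_telescope.2 fun s =>
    telescope_surjective_of_surjective hf (contraadjusted_iff_telescope.1 hD s)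

lemma contraadjusted_of_isAdicComplete (R : Type*) [CommRing R] [IsLocalRing R] (M : Type)
    [AddCommGroup M] [Module R M] [IsAdicComplete (IsLocalRing.maximalIdeal R) M] :
    Contraadjusted M := by
  refine contraadjusted_iff_telescope.2 fun s => ?_
  rw [← coe_telescope_algebraMap (R := R) s]
  exact telescope_surjective_of_isAdicComplete_maximalIdeal _

lemma not_contraadjusted_finsupp_padicInt (p : ℕ) [Fact p.Prime] (ι : Type) [Infinite ι] :
    ¬ Contraadjusted (ι →₀ ℤ_[p]) := by
  intro h
  refine not_surjective_telescope_finsupp (fun n => ⟨1, fun y hy => ?_⟩)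
    (contraadjusted_iff_telescope.1 h p)
  have hpy : (p : ℤ_[p]) * y = 1 := by
    have hpow : (p : ℤ_[p]) ^ n ≠ 0 := pow_ne_zero n (NeZero.ne _)
    refine mul_left_cancel₀ hpow ?_
    simpa [pow_succ, mul_assoc] using hy
  exact PadicInt.p_nonunit (.of_mul_eq_one y hpy)

lemma contraadjusted_of_weakKernel {A : Type} {B C : Type*} [AddCommGroup A] [AddCommGroup B]
    [AddCommGroup C] {f : A →ₗ[ℤ] B} {g : B →ₗ[ℤ] C} (hf : Function.Injective f)
    (hfg : Function.Exact f g) {ι : Type*} {D : ι → Type*} [∀ i, AddCommGroup (D i)]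
    {e : ∀ i, D i →ₗ[ℤ] A} (he : ⨆ i, LinearMap.range (e i) = ⊤)
    {K : Type} [AddCommGroup K] (hK : Contraadjusted K) {k : K →ₗ[ℤ] B} (hk : g ∘ₗ k = 0)
    (hlift : ∀ i, ∃ u : D i →ₗ[ℤ] K, k ∘ₗ u = f ∘ₗ e i) : Contraadjusted A := by
  let F : A ≃ₗ[ℤ] LinearMap.range f := LinearEquiv.ofInjective f hf
  let k' : K →ₗ[ℤ] A := F.symm ∘ₗ
    k.codRestrict (LinearMap.range f) fun y => (hfg (k y)).1 (LinearMap.congr_fun hk y)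
  have hk' (y : K) : f (k' y) = k y := congrArg Subtype.val (F.apply_symm_apply _)
  refine hK.of_surjective (f := k') (LinearMap.range_eq_top.1 (top_le_iff.1 ?_))
  rw [← he, iSup_le_iff]
  rintro i _ ⟨a, rfl⟩
  obtain ⟨u, hu⟩ := hlift i
  exact ⟨u a, hf ((hk' _).trans (LinearMap.congr_fun hu a))⟩

end Contraadjusted

theorem no_kernel_in_contraadjusted_general (p : ℕ) [Fact p.Prime] {ι : Type} [Infinite ι]
    {B C : Type*} [AddCommGroup B] [AddCommGroup C] {f : (ι →₀ ℤ_[p]) →ₗ[ℤ] B} {g : B →ₗ[ℤ] C}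
    (hf : Function.Injective f) (hfg : Function.Exact f g) :
    ¬ ∃ (K : Type) (_ : AddCommGroup K) (_ : Contraadjusted K) (k : K →ₗ[ℤ] B),
        g ∘ₗ k = 0 ∧
        ∀ (K' : Type) (_ : AddCommGroup K'), Contraadjusted K' →
          ∀ k' : K' →ₗ[ℤ] B, g ∘ₗ k' = 0 → ∃ u : K' →ₗ[ℤ] K, k ∘ₗ u = k' := by
  rintro ⟨K, _, hK, k, hk, hweak⟩
  refine not_contraadjusted_finsupp_padicInt p ι
    (contraadjusted_of_weakKernel hf hfg (Finsupp.iSup_lsingle_range (R := ℤ)) hK hk fun i => ?_)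
  refine hweak ℤ_[p] inferInstance (contraadjusted_of_isAdicComplete ℤ_[p] ℤ_[p]) _ ?_
  rw [← LinearMap.comp_assoc, hfg.linearMap_comp_eq_zero, LinearMap.zero_comp]

/-- The surjective homomorphism `B → C` of abelian groups, where `A = ℤ_p^{(ω)}`,
`B = ℚ ⊗_ℤ A` and `C = (ℚ/ℤ) ⊗_ℤ A`, has no kernel in the full subcategory of
contraadjusted abelian groups. -/
theorem no_kernel_in_contraadjusted (p : ℕ) [Fact p.Prime] :
    ¬ ∃ (K : Type) (_ : AddCommGroup K) (_ : Contraadjusted K)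
        (k : K →ₗ[ℤ] QTensorA p),
        (piBC p).comp k = 0 ∧
        ∀ (K' : Type) (_ : AddCommGroup K'), Contraadjusted K' →
          ∀ k' : K' →ₗ[ℤ] QTensorA p, (piBC p).comp k' = 0 →
            ∃! u : K' →ₗ[ℤ] K, k.comp u = k' := by
  rintro ⟨K, _, hK, k, hk, hkernel⟩
  exact no_kernel_in_contraadjusted_general p
    (Module.Flat.tensorProduct_mk_injective ℤ (PadicDirectSum p) ℚ) (iotaAB p).exact_map_mkQ_range
    ⟨K, _, hK, k, hk, fun K' _ hK' k' hk' => (hkernel K' _ hK' k' hk').exists⟩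
end

section
/- Let A be an abelian category with enough projectives, B ⊆ A a full subcategory closed under kernels and cokernels in A, reflective with reflector Δ : A → B (left adjoint to the inclusion). If L_nΔ(P) = 0 for every projective object P of B (viewed in A) and all n ≥ 1, then L_nΔ(B) = 0 for every object B of B and all n ≥ 1, where L_nΔ denotes the n-th left derived functor of Δ. -/
open CategoryTheory CategoryTheory.Limits

universe v₁ v₂ u₁ u₂

/-!
A projective short complex has a split monomorphism as its first map. Hence, if a short exact
sequence is resolved in the category of short complexes, the resolutions of its first two terms and
their degreewise split cokernel form a short exact sequence of projective resolutions (the horseshoe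
lemma). The resulting long exact sequence allows dimension shifting along `0 ⟶ K ⟶ P ⟶ X ⟶ 0` in
`B` with `P` projective. The shift from degree `1` to degree `0` works because `L₀Δ` agrees on `B`
with `Δ ∘ ι ≅ 𝟭`, which preserves monomorphisms.
-/

section FreeShortComplex

lemma epi_of_epi_τ {C : Type*} [Category* C] [HasZeroMorphisms C] {S T : ShortComplex C}
    (φ : S ⟶ T) [Epi φ.τ₁] [Epi φ.τ₂] [Epi φ.τ₃] : Epi φ where
  left_cancellation u v h := by
    ext
    · rw [← cancel_epi φ.τ₁, ← ShortComplex.comp_τ₁, h, ShortComplex.comp_τ₁]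
    · rw [← cancel_epi φ.τ₂, ← ShortComplex.comp_τ₂, h, ShortComplex.comp_τ₂]
    · rw [← cancel_epi φ.τ₃, ← ShortComplex.comp_τ₃, h, ShortComplex.comp_τ₃]

variable {A : Type*} [Category* A]

section Preadditive

variable [Preadditive A] [HasBinaryBiproducts A] {P₁ P₂ P₃ : A} {S : ShortComplex A}

/-- The short complex `P₁ ⟶ P₁ ⊞ P₂ ⟶ P₂ ⊞ P₃`: a morphism from it to `S` amounts to three
arbitrary morphisms `Pᵢ ⟶ S.Xᵢ`. -/
noncomputable abbrev freeShortComplex (P₁ P₂ P₃ : A) : ShortComplex A :=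
  ShortComplex.mk (biprod.inl : P₁ ⟶ P₁ ⊞ P₂) (biprod.snd ≫ (biprod.inl : P₂ ⟶ P₂ ⊞ P₃)) (by simp)

/-- The morphism from a free short complex determined by its components on the generators. -/
noncomputable abbrev freeShortComplexDesc (a₁ : P₁ ⟶ S.X₁) (a₂ : P₂ ⟶ S.X₂) (a₃ : P₃ ⟶ S.X₃) :
    freeShortComplex P₁ P₂ P₃ ⟶ S :=
  ShortComplex.homMk a₁ (biprod.desc (a₁ ≫ S.f) a₂) (biprod.desc (a₂ ≫ S.g) a₃)
    (by simp) (by cat_disch)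

lemma freeShortComplex_hom_ext {u v : freeShortComplex P₁ P₂ P₃ ⟶ S} (h₁ : u.τ₁ = v.τ₁)
    (h₂ : biprod.inr ≫ u.τ₂ = biprod.inr ≫ v.τ₂) (h₃ : biprod.inr ≫ u.τ₃ = biprod.inr ≫ v.τ₃) :
    u = v := by
  have inl_τ₂ (w : freeShortComplex P₁ P₂ P₃ ⟶ S) : biprod.inl ≫ w.τ₂ = w.τ₁ ≫ S.f :=
    w.comm₁₂.symm
  have inl_τ₃ (w : freeShortComplex P₁ P₂ P₃ ⟶ S) :
      biprod.inl ≫ w.τ₃ = biprod.inr ≫ w.τ₂ ≫ S.g := by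
    simpa using (biprod.inr ≫= w.comm₂₃).symm
  refine ShortComplex.hom_ext _ _ h₁ (biprod.hom_ext' _ _ ?_ h₂) (biprod.hom_ext' _ _ ?_ h₃)
  · rw [inl_τ₂, inl_τ₂, h₁]
  · rw [inl_τ₃, inl_τ₃, reassoc_of% h₂]

instance epi_freeShortComplexDesc (a₁ : P₁ ⟶ S.X₁) (a₂ : P₂ ⟶ S.X₂) (a₃ : P₃ ⟶ S.X₃)
    [Epi a₁] [Epi a₂] [Epi a₃] : Epi (freeShortComplexDesc a₁ a₂ a₃) := by
  have : Epi (freeShortComplexDesc a₁ a₂ a₃).τ₁ := inferInstanceAs (Epi a₁)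
  have : Epi (freeShortComplexDesc a₁ a₂ a₃).τ₂ := epi_of_epi_fac (biprod.inr_desc _ a₂)
  have : Epi (freeShortComplexDesc a₁ a₂ a₃).τ₃ := epi_of_epi_fac (biprod.inr_desc _ a₃)
  exact epi_of_epi_τ _

end Preadditive

variable [Abelian A]

instance projective_freeShortComplex (P₁ P₂ P₃ : A) [Projective P₁] [Projective P₂]
    [Projective P₃] : Projective (freeShortComplex P₁ P₂ P₃) where
  factors {S T} φ p _ := by
    have : Epi p.τ₁ := inferInstanceAs (Epi (ShortComplex.π₁.map p))
    have : Epi p.τ₂ := inferInstanceAs (Epi (ShortComplex.π₂.map p))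
    have : Epi p.τ₃ := inferInstanceAs (Epi (ShortComplex.π₃.map p))
    refine ⟨freeShortComplexDesc (Projective.factorThru φ.τ₁ p.τ₁)
      (Projective.factorThru (biprod.inr ≫ φ.τ₂) p.τ₂)
      (Projective.factorThru (biprod.inr ≫ φ.τ₃) p.τ₃), freeShortComplex_hom_ext ?_ ?_ ?_⟩ <;> simp

variable [EnoughProjectives A]

instance enoughProjectives_shortComplex : EnoughProjectives (ShortComplex A) where
  presentation S := ⟨{
    p := freeShortComplex (Projective.over S.X₁) (Projective.over S.X₂) (Projective.over S.X₃)
    f := freeShortComplexDesc (Projective.π S.X₁) (Projective.π S.X₂) (Projective.π S.X₃) }⟩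

lemma exists_retract_freeShortComplex (T : ShortComplex A) [Projective T] :
    ∃ (P₁ P₂ P₃ : A) (_ : Projective P₁) (_ : Projective P₂) (_ : Projective P₃),
      Nonempty (Retract T (freeShortComplex P₁ P₂ P₃)) :=
  let p := freeShortComplexDesc (Projective.π T.X₁) (Projective.π T.X₂) (Projective.π T.X₃)
  ⟨_, _, _, inferInstance, inferInstance, inferInstance,
    ⟨⟨Projective.factorThru (𝟙 T) p, p, Projective.factorThru_comp _ _⟩⟩⟩

instance preservesProjectiveObjects_π₁ :
    (ShortComplex.π₁ : ShortComplex A ⥤ A).PreservesProjectiveObjects where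
  projective_obj {T} _ := by
    obtain ⟨P₁, P₂, P₃, _, _, _, ⟨r⟩⟩ := exists_retract_freeShortComplex T
    exact (r.map ShortComplex.π₁).projective (p := inferInstanceAs (Projective P₁))

instance preservesProjectiveObjects_π₂ :
    (ShortComplex.π₂ : ShortComplex A ⥤ A).PreservesProjectiveObjects where
  projective_obj {T} _ := by
    obtain ⟨P₁, P₂, P₃, _, _, _, ⟨r⟩⟩ := exists_retract_freeShortComplex T
    exact (r.map ShortComplex.π₂).projective (p := inferInstanceAs (Projective (P₁ ⊞ P₂)))

instance isSplitMono_f_of_projective (T : ShortComplex A) [Projective T] : IsSplitMono T.f := by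
  obtain ⟨P₁, P₂, P₃, _, _, _, ⟨r⟩⟩ := exists_retract_freeShortComplex T
  refine ⟨⟨r.i.τ₂ ≫ biprod.fst ≫ r.r.τ₁, ?_⟩⟩
  have comm : r.i.τ₁ ≫ biprod.inl = T.f ≫ r.i.τ₂ := r.i.comm₁₂
  rw [← reassoc_of% comm, biprod.inl_fst_assoc, ← ShortComplex.comp_τ₁, r.retract,
    ShortComplex.id_τ₁]

end FreeShortComplex

section Horseshoe

lemma projective_cokernel_of_isSplitMono {C : Type*} [Category* C] [Preadditive C] {X Y : C}
    (f : X ⟶ Y) [IsSplitMono f] [HasCokernel f] [Projective Y] : Projective (cokernel f) :=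
  have hf : f ≫ (𝟙 Y - retraction f ≫ f) = 0 := by simp
  Retract.projective (Y := Y)
    { i := cokernel.desc f _ hf
      r := cokernel.π f
      retract := by simp [← cancel_epi (cokernel.π f)] }

lemma shortExact_cokernel {C : Type*} [Category* C] [Abelian C] {X Y : C} (f : X ⟶ Y) [Mono f] :
    (ShortComplex.mk f (cokernel.π f) (cokernel.condition f)).ShortExact where
  exact := ShortComplex.exact_cokernel f

lemma hom_comp_π_comp_single_map_g {C : Type*} [Category* C] [HasZeroObject C]
    [HasZeroMorphisms C] {S : ShortComplex C} {R₁ : ProjectiveResolution S.X₁}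
    {R₂ : ProjectiveResolution S.X₂} (φ : R₁.Hom R₂ S.f) :
    φ.hom ≫ R₂.π ≫ (ChainComplex.single₀ C).map S.g = 0 := by
  simp [← Functor.map_comp]

section MapProjectiveResolution

variable {C D : Type*} [Category* C] [Category* D] [HasZeroObject C] [HasZeroObject D]
  [Preadditive C] [Preadditive D] [CategoryWithHomology D]

lemma mapProjectiveResolution_π_f_zero (F : C ⥤ D) [F.Additive] [F.PreservesProjectiveObjects]
    [F.PreservesHomology] {X : C} (R : ProjectiveResolution X) :
    (F.mapProjectiveResolution R).π.f 0 = F.map (R.π.f 0) := by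
  have h : ((HomologicalComplex.singleMapHomologicalComplex F (.down ℕ) 0).hom.app X).f 0 =
      𝟙 (F.obj X) :=
    (HomologicalComplex.singleMapHomologicalComplex_hom_app_self F _ 0 X).trans
      ((Category.comp_id _).trans (F.map_id X))
  exact (F.map (R.π.f 0) ≫= h).trans (Category.comp_id _)

/-- The lift of `α.app X` to resolutions obtained by applying a natural transformation `α` to a
resolution of `X`. -/
noncomputable def mapProjectiveResolutionHom {F G : C ⥤ D} [F.Additive]
    [F.PreservesProjectiveObjects] [F.PreservesHomology] [G.Additive]
    [G.PreservesProjectiveObjects] [G.PreservesHomology] (α : F ⟶ G) {X : C}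
    (R : ProjectiveResolution X) :
    (F.mapProjectiveResolution R).Hom (G.mapProjectiveResolution R) (α.app X) where
  hom := (NatTrans.mapHomologicalComplex α _).app R.complex
  hom_f_zero_comp_π_f_zero := by
    rw [mapProjectiveResolution_π_f_zero, mapProjectiveResolution_π_f_zero,
      ChainComplex.single₀_map_f_zero]
    exact (α.naturality (R.π.f 0)).symm

end MapProjectiveResolution

instance additive_π₁ {C : Type*} [Category* C] [Preadditive C] :
    (ShortComplex.π₁ : ShortComplex C ⥤ C).Additive where

instance additive_π₂ {C : Type*} [Category* C] [Preadditive C] :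
    (ShortComplex.π₂ : ShortComplex C ⥤ C).Additive where

variable {A : Type*} [Category* A] [Abelian A]

/-- The cokernel of a lift `φ` of `S.f` to resolutions of `S.X₁` and `S.X₂`, as a resolution of
`S.X₃`; the degreewise splittings of `φ` make it projective. -/
noncomputable def cokernelResolution {S : ShortComplex A} (hS : S.ShortExact)
    {R₁ : ProjectiveResolution S.X₁} {R₂ : ProjectiveResolution S.X₂} (φ : R₁.Hom R₂ S.f)
    [∀ n, IsSplitMono (φ.hom.f n)] : ProjectiveResolution S.X₃ where
  complex := cokernel φ.hom
  projective n :=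
    .of_iso (PreservesCokernel.iso (HomologicalComplex.eval A _ n) φ.hom).symm
      (projective_cokernel_of_isSplitMono (φ.hom.f n))
  π := cokernel.desc φ.hom _ (hom_comp_π_comp_single_map_g φ)
  quasiIso :=
    have : Mono φ.hom := HomologicalComplex.mono_of_mono_f _ fun _ ↦ inferInstance
    HomologicalComplex.HomologySequence.quasiIso_τ₃
      (S₁ := .mk φ.hom _ (cokernel.condition φ.hom)) (S₂ := S.map (ChainComplex.single₀ A))
      (ShortComplex.homMk R₁.π R₂.π _ φ.hom_comp_π.symm (cokernel.π_desc _ _ _).symm)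
      (shortExact_cokernel φ.hom) (hS.map_of_exact _) R₁.quasiIso R₂.quasiIso

theorem exists_shortExact_projectiveResolution [EnoughProjectives A]
    {S : ShortComplex A} (hS : S.ShortExact) :
    ∃ (R₁ : ProjectiveResolution S.X₁) (R₂ : ProjectiveResolution S.X₂)
      (R₃ : ProjectiveResolution S.X₃) (φ : R₁.Hom R₂ S.f) (ψ : R₂.Hom R₃ S.g)
      (w : φ.hom ≫ ψ.hom = 0), (ShortComplex.mk φ.hom ψ.hom w).ShortExact := by
  let R := ProjectiveResolution.of S
  let φ := mapProjectiveResolutionHom ShortComplex.π₁Toπ₂ R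
  have (n : ℕ) : IsSplitMono (φ.hom.f n) := inferInstanceAs (IsSplitMono (R.complex.X n).f)
  have : Mono φ.hom := HomologicalComplex.mono_of_mono_f _ fun _ ↦ inferInstance
  have hπ := HomologicalComplex.congr_hom (cokernel.π_desc _ _ (hom_comp_π_comp_single_map_g φ)) 0
  exact ⟨_, _, cokernelResolution hS φ, φ, ⟨cokernel.π φ.hom, hπ⟩, cokernel.condition _,
    shortExact_cokernel φ.hom⟩

end Horseshoe

section LeftDerived

variable {A D : Type*} [Category* A] [Category* D] [Abelian A] [Abelian D] (F : A ⥤ D)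
  [F.Additive]

lemma shortExact_map_of_projective_X₃ {ι : Type*} {c : ComplexShape ι}
    {K : ShortComplex (HomologicalComplex A c)} (hK : K.ShortExact)
    [∀ i, Projective (K.X₃.X i)] : (K.map (F.mapHomologicalComplex c)).ShortExact :=
  HomologicalComplex.shortExact_of_degreewise_shortExact _ fun i ↦
    have : Projective (K.map (HomologicalComplex.eval A c i)).X₃ :=
      inferInstanceAs (Projective (K.X₃.X i))
    ((hK.map_of_exact (HomologicalComplex.eval A c i)).splittingOfProjective.map F).shortExact

/-- The map induced on `L_n F` by `f` is, up to isomorphism of arrows, the map induced on the `n`-th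
homology of `F` of the resolutions by a lift of `f`. -/
noncomputable def leftDerivedMapArrowIso [HasProjectiveResolutions A] {X Y : A} {f : X ⟶ Y}
    {P : ProjectiveResolution X} {Q : ProjectiveResolution Y} (φ : P.Hom Q f) (n : ℕ) :
    Arrow.mk ((F.leftDerived n).map f) ≅
      Arrow.mk (HomologicalComplex.homologyMap ((F.mapHomologicalComplex _).map φ.hom) n) :=
  Arrow.isoMk (P.isoLeftDerivedObj F n) (Q.isoLeftDerivedObj F n)
    (P.isoLeftDerivedObj_hom_naturality f Q φ.hom (φ.hom_f_zero_comp_π_f_zero.trans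
      (by rw [ChainComplex.single₀_map_f_zero]; rfl)) F n).symm

variable [EnoughProjectives A]

theorem isZero_leftDerived_succ_obj_X₃ {S : ShortComplex A} (hS : S.ShortExact) (n : ℕ)
    (epi : Epi ((F.leftDerived (n + 1)).map S.f)) (mono : Mono ((F.leftDerived n).map S.f)) :
    IsZero ((F.leftDerived (n + 1)).obj S.X₃) := by
  obtain ⟨R₁, R₂, R₃, φ, ψ, w, hK⟩ := exists_shortExact_projectiveResolution hS
  have exactAt : ((F.mapHomologicalComplex _).obj R₃.complex).ExactAt (n + 1) := by
    refine (shortExact_map_of_projective_X₃ F hK).exactAt_X₃ (n + 1) ?_ fun j hj ↦ ?_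
    · exact ((MorphismProperty.epimorphisms D).arrow_mk_iso_iff
        (leftDerivedMapArrowIso F φ _)).1 epi
    · obtain rfl : j = n := by simpa using hj
      exact ((MorphismProperty.monomorphisms D).arrow_mk_iso_iff
        (leftDerivedMapArrowIso F φ _)).1 mono
  exact ((HomologicalComplex.exactAt_iff_isZero_homology _ _).1 exactAt).of_iso
    (R₃.isoLeftDerivedObj F (n + 1))

lemma isZero_leftDerived_succ_obj_of_mono {C : Type*} [Category* C] [Abelian C] (G : C ⥤ A)
    [PreservesFiniteLimits G] [PreservesFiniteColimits G] {P X : C} (p : P ⟶ X) [Epi p] (n : ℕ)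
    (hP : IsZero ((F.leftDerived (n + 1)).obj (G.obj P)))
    (hp : Mono ((F.leftDerived n).map (G.map (kernel.ι p)))) :
    IsZero ((F.leftDerived (n + 1)).obj (G.obj X)) :=
  have hS : (ShortComplex.mk (kernel.ι p) p (kernel.condition p)).ShortExact :=
    { exact := ShortComplex.exact_kernel p }
  isZero_leftDerived_succ_obj_X₃ F (hS.map_of_exact G) n (hP.epi _) hp

variable [PreservesFiniteColimits F]

lemma mono_leftDerived_zero_map {X Y : A} (f : X ⟶ Y) [Mono (F.map f)] :
    Mono ((F.leftDerived 0).map f) :=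
  ((MorphismProperty.monomorphisms D).arrow_mk_iso_iff
    (((Functor.mapArrowFunctor _ _).mapIso F.leftDerivedZeroIsoSelf).app (Arrow.mk f))).2 ‹_›

theorem isZero_leftDerived_succ_obj_of_exists_epi {C : Type*} [Category* C] [Abelian C]
    (G : C ⥤ A) [PreservesFiniteLimits G] [PreservesFiniteColimits G]
    [(G ⋙ F).PreservesMonomorphisms]
    (cover : ∀ X : C, ∃ (P : C) (p : P ⟶ X), Epi p ∧
      ∀ n, IsZero ((F.leftDerived (n + 1)).obj (G.obj P)))
    (X : C) (n : ℕ) : IsZero ((F.leftDerived (n + 1)).obj (G.obj X)) := by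
  induction n generalizing X with
  | zero =>
    obtain ⟨P, p, _, hP⟩ := cover X
    have : Mono (F.map (G.map (kernel.ι p))) := (G ⋙ F).map_mono (kernel.ι p)
    exact isZero_leftDerived_succ_obj_of_mono F G p 0 (hP 0) (mono_leftDerived_zero_map F _)
  | succ n ih =>
    obtain ⟨P, p, _, hP⟩ := cover X
    exact isZero_leftDerived_succ_obj_of_mono F G p (n + 1) (hP (n + 1)) ((ih (kernel p)).mono _)

end LeftDerived

/-- Let `A` be an abelian category with enough projectives, `B` a (reflective, exactly
embedded) full abelian subcategory of `A`: the inclusion `ι : B ⥤ A` is fully faithful and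
exact, with left adjoint (reflector) `Δ : A ⥤ B`.  If `LₙΔ(P) = 0` for every projective
object `P` of `B` and all `n ≥ 1`, then `LₙΔ(B) = 0` for every object `B` of `B` and all
`n ≥ 1`. -/
theorem leftDerived_reflector_vanishes_on_subcategory
    {A : Type u₁} [Category.{v₁} A] [Abelian A] [EnoughProjectives A]
    {B : Type u₂} [Category.{v₂} B] [Abelian B]
    (ι : B ⥤ A) [ι.Full] [ι.Faithful]
    [PreservesFiniteLimits ι] [PreservesFiniteColimits ι]
    (Δ : A ⥤ B) [Δ.Additive] (adj : Δ ⊣ ι)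
    (hproj : ∀ (P : B), Projective P → ∀ n : ℕ, 1 ≤ n →
      IsZero ((Δ.leftDerived n).obj (ι.obj P))) :
    ∀ (X : B) (n : ℕ), 1 ≤ n → IsZero ((Δ.leftDerived n).obj (ι.obj X)) := by
  intro X n hn
  obtain ⟨m, rfl⟩ := Nat.exists_eq_add_of_le' hn
  have := adj.leftAdjoint_preservesColimits
  have : (ι ⋙ Δ).PreservesMonomorphisms := .of_iso (asIso adj.counit).symm
  refine isZero_leftDerived_succ_obj_of_exists_epi Δ ι (fun Y ↦ ?_) X m
  have hP : Projective (Δ.obj (Projective.over (ι.obj Y))) := adj.map_projective _ inferInstance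
  exact ⟨_, Δ.map (Projective.π (ι.obj Y)) ≫ adj.counit.app Y, inferInstance,
    fun n ↦ hproj _ hP _ n.succ_pos⟩
end
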